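/- Let a > 1 and b ∈ ℝ, 0 < |b| < 1/3. Define the linear functional S̃ on polynomials by S̃(w) = ∫₀^{2π} w(e^{iθ}) p(θ,a,b) dθ, where 2π p(θ,a,b) = -1 + 2(a-1)∫₀¹ e^{-bu cos θ} cos(bu sin θ)(1-u)^{a-2} du. Then S̃(z^n) = (-b)^n/(a)_n for all n ∈ ℤ₊, and consequently for the moments m_n' = (-b)^{n+1}/(a)_n of the Krall–Frink functional S one has S̃(w) = -(1/b) S(w) for every polynomial w. -/

import Mathlib

open MeasureTheory Real in
/-- Cauchy's formula for derivatives at the centre of the unit disc, as an integral over the angle. -/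
theorem integral_exp_pow_inv_mul_comp_exp {f : ℂ → ℂ} (hf : Differentiable ℂ f) (k : ℕ) :
    ∫ θ in (0:ℝ)..(2 * π), (Complex.exp (θ * Complex.I) ^ k)⁻¹ * f (Complex.exp (θ * Complex.I)) =
      2 * π / k.factorial * iteratedDeriv k f 0 := by
  have h := hf.differentiableOn.circleIntegral_one_div_sub_center_pow_smul
    (c := 0) (R := 1) one_pos k
  have hI : (∮ z in C(0, 1), (1 / (z - 0) ^ (k + 1)) • f z) = Complex.I *
      ∫ θ in (0:ℝ)..(2 * π),
        (Complex.exp (θ * Complex.I) ^ k)⁻¹ * f (Complex.exp (θ * Complex.I)) := by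
    rw [circleIntegral, ← intervalIntegral.integral_const_mul]
    congr 1 with θ
    have hne : Complex.exp (θ * Complex.I) ≠ 0 := Complex.exp_ne_zero _
    simp [deriv_circleMap, circleMap]
    field_simp
    ring
  rw [hI, smul_eq_mul] at h
  apply mul_left_cancel₀ Complex.I_ne_zero
  rw [h]
  ring

open Real in
theorem integral_exp_pow_mul_exp_mul_exp (n : ℕ) (c : ℂ) :
    ∫ θ in (0:ℝ)..(2 * π), Complex.exp (θ * Complex.I) ^ n *
      Complex.exp (c * Complex.exp (θ * Complex.I)) = if n = 0 then 2 * (π : ℂ) else 0 := by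
  have h := integral_exp_pow_inv_mul_comp_exp
    (f := fun z ↦ z ^ n * Complex.exp (c * z)) (by fun_prop) 0
  simp only [pow_zero, inv_one, one_mul] at h
  rw [h]
  rcases eq_or_ne n 0 with rfl | hn <;> simp [*]

open Real in
theorem integral_exp_pow_mul_exp_mul_exp_neg (n : ℕ) (c : ℂ) :
    ∫ θ in (0:ℝ)..(2 * π), Complex.exp (θ * Complex.I) ^ n *
      Complex.exp (c * Complex.exp (-(θ * Complex.I))) = 2 * π * (c ^ n / n.factorial) := by
  have h := integral_exp_pow_inv_mul_comp_exp (f := fun z ↦ Complex.exp (c * z)) (by fun_prop) n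
  have hs := intervalIntegral.integral_comp_sub_left (a := 0) (b := 2 * π)
    (fun θ : ℝ ↦ (Complex.exp (θ * Complex.I) ^ n)⁻¹ *
      Complex.exp (c * Complex.exp (θ * Complex.I))) (2 * π)
  rw [sub_self, sub_zero, h, iteratedDeriv_cexp_const_mul] at hs
  have he (θ : ℝ) : Complex.exp (((2 * π - θ : ℝ) : ℂ) * Complex.I) =
      Complex.exp (-(θ * Complex.I)) := by
    rw [← Complex.exp_periodic (-(θ * Complex.I))]
    push_cast
    ring_nf
  simp only [he] at hs
  simp only [Complex.exp_neg (_ * Complex.I), inv_pow, inv_inv] at hs ⊢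
  rw [hs]
  simp
  ring

theorem ofReal_exp_mul_cos_eq (t θ : ℝ) :
    ((Real.exp (-(t * Real.cos θ)) * Real.cos (t * Real.sin θ) : ℝ) : ℂ) =
      (Complex.exp (-t * Complex.exp (θ * Complex.I)) +
        Complex.exp (-t * Complex.exp (-(θ * Complex.I)))) / 2 := by
  rw [← neg_mul (θ : ℂ), Complex.exp_mul_I, Complex.exp_mul_I, Complex.cos_neg, Complex.sin_neg]
  push_cast
  rw [Complex.cos.eq_1 (t * _), mul_div_assoc', mul_add, ← Complex.exp_add, ← Complex.exp_add,
    add_comm]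
  ring_nf

open Real in
theorem integral_exp_pow_mul_exp_mul_cos (n : ℕ) (t : ℝ) :
    ∫ θ in (0:ℝ)..(2 * π), Complex.exp (θ * Complex.I) ^ n *
      ((Real.exp (-(t * Real.cos θ)) * Real.cos (t * Real.sin θ) : ℝ) : ℂ) =
      (π + if n = 0 then (π : ℂ) else 0) * ((-t) ^ n / n.factorial) := by
  simp only [ofReal_exp_mul_cos_eq, mul_div_assoc', mul_add]
  rw [intervalIntegral.integral_div, intervalIntegral.integral_add
    (Continuous.intervalIntegrable (by fun_prop) _ _)
    (Continuous.intervalIntegrable (by fun_prop) _ _),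
    integral_exp_pow_mul_exp_mul_exp, integral_exp_pow_mul_exp_mul_exp_neg]
  rcases eq_or_ne n 0 with rfl | hn
  · simp [two_mul]
  · simp only [hn, if_false]
    ring

/-- The Beta integral at a positive integer, in terms of the rising factorial of `a`. -/
theorem integral_pow_mul_one_sub_rpow {a : ℝ} (ha : 1 < a) (n : ℕ) :
    ∫ u in (0:ℝ)..1, (u : ℂ) ^ n * (((1 - u) ^ (a - 2) : ℝ) : ℂ) =
      n.factorial / ((a - 1) * ∏ i ∈ Finset.range n, ((a : ℂ) + i)) := by
  have h := Complex.betaIntegral_eval_nat_add_one_right (u := (a : ℂ) - 1) (by simpa using ha) n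
  rw [Complex.betaIntegral_symm, Finset.prod_range_succ'] at h
  have hprod : (∏ k ∈ Finset.range n, ((a : ℂ) - 1 + (k + 1 : ℕ))) * ((a : ℂ) - 1 + (0 : ℕ)) =
      (a - 1) * ∏ i ∈ Finset.range n, ((a : ℂ) + i) := by
    rw [mul_comm]
    push_cast
    congr 1
    · ring
    · exact Finset.prod_congr rfl fun i _ ↦ by ring
  rw [hprod] at h
  rw [← h, Complex.betaIntegral]
  refine intervalIntegral.integral_congr fun u hu ↦ ?_
  rw [Set.uIcc_of_le zero_le_one] at hu
  simp only [add_sub_cancel_right, Complex.cpow_natCast]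
  rw [Complex.ofReal_cpow (sub_nonneg.2 hu.2)]
  push_cast
  congr 2
  ring

open MeasureTheory Real in
theorem integrable_exp_mul_cos_mul_one_sub_rpow {a : ℝ} (ha : 1 < a) (b : ℝ) :
    Integrable (fun x : ℝ × ℝ ↦ Real.exp (-(b * x.2 * Real.cos x.1)) *
        Real.cos (b * x.2 * Real.sin x.1) * (1 - x.2) ^ (a - 2))
      ((volume.restrict (Set.uIoc 0 (2 * π))).prod (volume.restrict (Set.uIoc 0 1))) := by
  have hg : Integrable (fun u : ℝ ↦ (1 - u) ^ (a - 2)) (volume.restrict (Set.uIoc 0 1)) := by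
    have h := (intervalIntegral.intervalIntegrable_rpow' (a := 0) (b := 1)
      (show -1 < a - 2 by linarith)).comp_sub_left 1
    rw [sub_zero, sub_self] at h
    exact intervalIntegrable_iff.1 h.symm
  have : IsFiniteMeasure (volume.restrict (Set.uIoc 0 (2 * π))) :=
    inferInstanceAs (IsFiniteMeasure (volume.restrict (Set.Ioc _ _)))
  refine (hg.comp_snd (volume.restrict (Set.uIoc 0 (2 * π)))).bdd_mul (c := Real.exp |b|)
    (Continuous.aestronglyMeasurable (by fun_prop)) ?_
  rw [Measure.prod_restrict]
  refine (ae_restrict_iff' (measurableSet_uIoc.prod measurableSet_uIoc)).2 (.of_forall ?_)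
  rintro ⟨θ, u⟩ ⟨-, hu⟩
  rw [Set.uIoc_of_le zero_le_one] at hu
  have h1 : -(b * u * Real.cos θ) ≤ |b| := by
    refine (neg_le_abs _).trans ?_
    rw [abs_mul, abs_mul, abs_of_pos hu.1]
    exact mul_le_of_le_one_right (mul_nonneg (abs_nonneg b) hu.1.le) (Real.abs_cos_le_one θ) |>.trans
      (mul_le_of_le_one_right (abs_nonneg b) hu.2)
  rw [norm_mul, Real.norm_eq_abs, Real.norm_eq_abs, abs_of_pos (Real.exp_pos _)]
  exact (mul_le_of_le_one_right (Real.exp_pos _).le (Real.abs_cos_le_one _)).trans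
    (Real.exp_le_exp.2 h1)

open MeasureTheory Real in
theorem integral_exp_pow_mul_integral {a : ℝ} (ha : 1 < a) (b : ℝ) (n : ℕ) :
    ∫ θ in (0:ℝ)..(2 * π), Complex.exp (θ * Complex.I) ^ n *
      ((∫ u in (0:ℝ)..1, Real.exp (-(b * u * Real.cos θ)) * Real.cos (b * u * Real.sin θ) *
        (1 - u) ^ (a - 2) : ℝ) : ℂ) =
      (π + if n = 0 then (π : ℂ) else 0) * (-b) ^ n /
        ((a - 1) * ∏ i ∈ Finset.range n, ((a : ℂ) + i)) := by
  simp only [← intervalIntegral.integral_ofReal, ← intervalIntegral.integral_const_mul]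
  rw [intervalIntegral_intervalIntegral_swap]
  · have hinner (u : ℝ) : ∫ θ in (0:ℝ)..(2 * π), Complex.exp (θ * Complex.I) ^ n *
        ((Real.exp (-(b * u * Real.cos θ)) * Real.cos (b * u * Real.sin θ) *
          (1 - u) ^ (a - 2) : ℝ) : ℂ) =
        ((π + if n = 0 then (π : ℂ) else 0) * ((-b) ^ n / n.factorial)) *
          ((u : ℂ) ^ n * (((1 - u) ^ (a - 2) : ℝ) : ℂ)) := by
      simp only [Complex.ofReal_mul _ ((1 - u) ^ (a - 2)), ← mul_assoc]
      rw [intervalIntegral.integral_mul_const, integral_exp_pow_mul_exp_mul_cos]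
      push_cast
      rw [← neg_mul, mul_pow]
      ring
    simp only [hinner]
    rw [intervalIntegral.integral_const_mul, integral_pow_mul_one_sub_rpow ha]
    have : (n.factorial : ℂ) ≠ 0 := Nat.cast_ne_zero.2 n.factorial_ne_zero
    field_simp
  · rw [Measure.volume_eq_prod, IntegrableOn, ← Measure.prod_restrict]
    refine (integrable_exp_mul_cos_mul_one_sub_rpow ha b).ofReal.bdd_mul (c := 1)
      (f := fun x : ℝ × ℝ ↦ Complex.exp (x.1 * Complex.I) ^ n)
      (Continuous.aestronglyMeasurable (by fun_prop)) (.of_forall fun x ↦ ?_)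
    simp [Complex.norm_exp_ofReal_mul_I]

theorem integral_exp_pow (n : ℕ) :
    ∫ θ in (0:ℝ)..(2 * Real.pi), Complex.exp (θ * Complex.I) ^ n =
      if n = 0 then 2 * (Real.pi : ℂ) else 0 := by
  simpa using integral_exp_pow_mul_exp_mul_exp n 0


open Polynomial in
/-- The functional `S̃(w) = ∫₀^{2π} w(e^{iθ}) p(θ) dθ` has moments `(-b)ⁿ/(a)ₙ`, and hence
`S̃(w) = -(1/b) S(w)` for any linear functional `S` on polynomials with the Krall–Frink
moments `S(zⁿ) = (-b)^{n+1}/(a)ₙ`. -/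
theorem functional_comparison (a b : ℝ) (ha : 1 < a) (hb0 : 0 < |b|) (hb : |b| < 1/3)
    (p : ℝ → ℝ)
    (hp : ∀ θ : ℝ, 2 * Real.pi * p θ = -1 + 2 * (a - 1) * ∫ u in (0:ℝ)..1,
        Real.exp (-(b * u * Real.cos θ)) * Real.cos (b * u * Real.sin θ) * (1 - u) ^ (a - 2)) :
    (∀ n : ℕ, ∫ θ in (0:ℝ)..(2 * Real.pi),
        (Complex.exp (θ * Complex.I)) ^ n * (p θ : ℂ) =
        (-(b : ℂ)) ^ n / (∏ i ∈ Finset.range n, ((a : ℂ) + i))) ∧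
    ∀ S : Polynomial ℂ →ₗ[ℂ] ℂ,
      (∀ n : ℕ, S (Polynomial.X ^ n) =
        (-(b : ℂ)) ^ (n + 1) / (∏ i ∈ Finset.range n, ((a : ℂ) + i))) →
      ∀ w : Polynomial ℂ,
        (∫ θ in (0:ℝ)..(2 * Real.pi), w.eval (Complex.exp (θ * Complex.I)) * (p θ : ℂ)) =
          -(1 / (b : ℂ)) * S w := by
  have hpi : (Real.pi : ℂ) ≠ 0 := Complex.ofReal_ne_zero.2 Real.pi_ne_zero
  have ha1 : (a : ℂ) - 1 ≠ 0 := by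
    exact_mod_cast (sub_pos.2 ha).ne'
  have hbC : (b : ℂ) ≠ 0 := Complex.ofReal_ne_zero.2 (abs_pos.1 hb0)
  have hJ : IntervalIntegrable (fun θ : ℝ ↦ ∫ u in (0:ℝ)..1, Real.exp (-(b * u * Real.cos θ)) *
      Real.cos (b * u * Real.sin θ) * (1 - u) ^ (a - 2)) MeasureTheory.volume 0 (2 * Real.pi) := by
    rw [intervalIntegrable_iff, MeasureTheory.IntegrableOn]
    simpa [intervalIntegral.intervalIntegral_eq_integral_uIoc] using
      (integrable_exp_mul_cos_mul_one_sub_rpow ha b).integral_prod_left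
  set J : ℝ → ℝ := fun θ ↦ ∫ u in (0:ℝ)..1, Real.exp (-(b * u * Real.cos θ)) *
      Real.cos (b * u * Real.sin θ) * (1 - u) ^ (a - 2)
  have hpJ : p = fun θ ↦ (-1 + 2 * (a - 1) * J θ) / (2 * Real.pi) := by
    funext θ
    rw [eq_div_iff Real.two_pi_pos.ne', mul_comm, hp θ]
  have hpint : IntervalIntegrable (fun θ ↦ (p θ : ℂ)) MeasureTheory.volume 0 (2 * Real.pi) := by
    have h : IntervalIntegrable p MeasureTheory.volume 0 (2 * Real.pi) := by
      rw [hpJ]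
      exact (intervalIntegrable_const.add (hJ.const_mul _)).div_const _
    exact ⟨h.1.ofReal, h.2.ofReal⟩
  have hJint (n : ℕ) : IntervalIntegrable (fun θ : ℝ ↦ Complex.exp (θ * Complex.I) ^ n * (J θ : ℂ))
      MeasureTheory.volume 0 (2 * Real.pi) :=
    IntervalIntegrable.continuousOn_mul ⟨hJ.1.ofReal, hJ.2.ofReal⟩
      (Continuous.continuousOn (by fun_prop))
  have hmom (n : ℕ) : ∫ θ in (0:ℝ)..(2 * Real.pi),
      (Complex.exp (θ * Complex.I)) ^ n * (p θ : ℂ) =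
        (-(b : ℂ)) ^ n / (∏ i ∈ Finset.range n, ((a : ℂ) + i)) := by
    have hsplit (θ : ℝ) : Complex.exp (θ * Complex.I) ^ n * (p θ : ℂ) =
        (2 * (a - 1) * (Complex.exp (θ * Complex.I) ^ n * (J θ : ℂ)) -
          Complex.exp (θ * Complex.I) ^ n) / (2 * Real.pi) := by
      rw [hpJ]
      push_cast
      ring
    simp only [hsplit]
    rw [intervalIntegral.integral_div, intervalIntegral.integral_sub ((hJint n).const_mul _)
      (Continuous.intervalIntegrable (by fun_prop) _ _), intervalIntegral.integral_const_mul,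
      integral_exp_pow_mul_integral ha, integral_exp_pow]
    rcases eq_or_ne n 0 with rfl | hn
    · simp
      field_simp
      ring
    · simp only [hn, if_false]
      field_simp
      ring
  refine ⟨hmom, fun S hS w ↦ ?_⟩
  induction w using Polynomial.induction_on' with
  | add q r hq hr =>
    have hint (v : Polynomial ℂ) : IntervalIntegrable
        (fun θ : ℝ ↦ v.eval (Complex.exp (θ * Complex.I)) * (p θ : ℂ))
        MeasureTheory.volume 0 (2 * Real.pi) :=
      hpint.continuousOn_mul (Continuous.continuousOn (by fun_prop))
    simp only [Polynomial.eval_add, add_mul]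
    rw [intervalIntegral.integral_add (hint q) (hint r), hq, hr, map_add, mul_add]
  | monomial n c =>
    simp only [Polynomial.eval_monomial, mul_assoc]
    rw [intervalIntegral.integral_const_mul, hmom, ← Polynomial.C_mul_X_pow_eq_monomial,
      ← Polynomial.smul_eq_C_mul, map_smul, hS, smul_eq_mul, pow_succ]
    field_simp
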